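/- In the backward Riccati recursion context, for every t with 0 ≤ t ≤ T one has (P_t)₂₂ = ā^{T−t} − Σ_{j=t}^{T−1} (q²/r)^{T−j−1} · s · ā^{j−t}. -/

import Mathlib

open Matrix

/-!
The backward step is `X ↦ M ⊙ X - (g * X₀₀)⁻¹ • (w * X.col 0)(w * X.col 0)ᵀ` for constant `M`, `w`
and `g`. In the first column the factor `X₀₀` cancels, so each entry `X i 0` is merely multiplied
by the entry `S i 0` of `S = M - g⁻¹ • w wᵀ`; here `r = S 0 0` and `q = S 1 0`. Hence the first
column is geometric in time, and every other entry satisfies a scalar linear recurrence whose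
forcing term is geometric with ratio `S i 0 * S j 0 / S 0 0`, which is `q² / r` for `i = j = 1`.
-/

theorem eq_pow_mul_add_sum_Ico_of_backward_recurrence {R : Type*} [Semiring R] {a : R}
    {x f : ℕ → R} {T t : ℕ} (hx : ∀ k < T, x k = a * x (k + 1) + f k) (ht : t ≤ T) :
    x t = a ^ (T - t) * x T + ∑ j ∈ Finset.Ico t T, a ^ (j - t) * f j := by
  induction ht using Nat.decreasingInduction with
  | self => simp
  | of_succ k hk ih =>
    have sum_shift : a * ∑ j ∈ Finset.Ico (k + 1) T, a ^ (j - (k + 1)) * f j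
        = ∑ j ∈ Finset.Ico (k + 1) T, a ^ (j - k) * f j := by
      rw [Finset.mul_sum]
      refine Finset.sum_congr rfl fun j hj => ?_
      have : j - k = j - (k + 1) + 1 := by grind
      rw [this, pow_succ', mul_assoc]
    have exponent : T - k = T - (k + 1) + 1 := by lia
    rw [hx k hk, ih, mul_add, sum_shift, Finset.sum_eq_sum_Ico_succ_bot hk, exponent, pow_succ',
      Nat.sub_self, pow_zero, one_mul, mul_assoc, add_assoc, add_comm (f k)]

theorem eq_pow_mul_of_backward_recurrence {R : Type*} [Semiring R] {a : R}
    {x : ℕ → R} {T t : ℕ} (hx : ∀ k < T, x k = a * x (k + 1)) (ht : t ≤ T) :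
    x t = a ^ (T - t) * x T := by
  simpa using eq_pow_mul_add_sum_Ico_of_backward_recurrence (f := fun _ => 0)
    (fun k hk => (hx k hk).trans (add_zero _).symm) ht

theorem isSymm_sub_smul_vecMulVec_self {ι R : Type*} [CommRing R] {F : Matrix ι ι R}
    (hF : F.IsSymm) (c : R) (v : ι → R) : (F - c • vecMulVec v v).IsSymm :=
  hF.sub (IsSymm.smul (transpose_vecMulVec v v) c)

section Riccati

variable {ι 𝕜 : Type*} [Field 𝕜]

/-- The backward Riccati step `F - G⁻¹ H Hᵀ` for a scalar control, with `F = M ⊙ X`,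
`H i = w i * X i o` and `G = g * X o o`, for a distinguished index `o`, the pivot. -/
def riccatiStep (M : Matrix ι ι 𝕜) (w : ι → 𝕜) (g : 𝕜) (o : ι) (X : Matrix ι ι 𝕜) :
    Matrix ι ι 𝕜 :=
  M ⊙ X - (g * X o o)⁻¹ • vecMulVec (w * X.col o) (w * X.col o)

/-- The Schur complement `M - g⁻¹ w wᵀ` of `g` in the block matrix `[[M, w], [wᵀ, g]]`; its pivot
column holds the multipliers of the Riccati step. -/
def riccatiSchur (M : Matrix ι ι 𝕜) (w : ι → 𝕜) (g : 𝕜) : Matrix ι ι 𝕜 :=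
  M - g⁻¹ • vecMulVec w w

variable {M : Matrix ι ι 𝕜} {w : ι → 𝕜} {g : 𝕜} {o : ι}

theorem riccatiStep_apply (X : Matrix ι ι 𝕜) (i j : ι) :
    riccatiStep M w g o X i j =
      M i j * X i j - w i * w j / g * (X i o * X j o / X o o) := by
  simp only [riccatiStep, Matrix.sub_apply, hadamard_apply, Matrix.smul_apply, vecMulVec_apply,
    Pi.mul_apply, col_apply, smul_eq_mul]
  ring

theorem riccatiStep_apply_pivot {X : Matrix ι ι 𝕜} (hX : X o o ≠ 0) (i : ι) :
    riccatiStep M w g o X i o = riccatiSchur M w g i o * X i o := by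
  rw [riccatiStep_apply, mul_div_cancel_right₀ _ hX]
  simp only [riccatiSchur, Matrix.sub_apply, Matrix.smul_apply, vecMulVec_apply, smul_eq_mul]
  ring

theorem riccatiStep_fin_two {X : Matrix (Fin 2) (Fin 2) 𝕜} (hX : X.IsSymm) (a b c u v g : 𝕜) :
    riccatiStep !![a, b; b, c] ![u, v] g 0 X =
      !![a * X 0 0, b * X 0 1; b * X 0 1, c * X 1 1]
        - (1 / (g * X 0 0)) •
            vecMulVec ![u * X 0 0, v * X 1 0] ![u * X 0 0, v * X 1 0] := by
  ext i j
  fin_cases i <;> fin_cases j <;> simp [riccatiStep, vecMulVec_apply, hX.apply 0 1]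

variable {P : ℕ → Matrix ι ι 𝕜} {T t : ℕ}

theorem riccati_pivot_ne_zero (hP : ∀ k < T, P k = riccatiStep M w g o (P (k + 1)))
    (hT : P T o o ≠ 0) (hS : riccatiSchur M w g o o ≠ 0) (ht : t ≤ T) : P t o o ≠ 0 := by
  induction ht using Nat.decreasingInduction with
  | self => exact hT
  | of_succ k hk ih =>
    rw [hP k hk, riccatiStep_apply_pivot ih]
    exact mul_ne_zero hS ih

theorem riccati_apply_pivot_eq_pow_mul (hP : ∀ k < T, P k = riccatiStep M w g o (P (k + 1)))
    (hT : P T o o ≠ 0) (hS : riccatiSchur M w g o o ≠ 0) (ht : t ≤ T) (i : ι) :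
    P t i o = riccatiSchur M w g i o ^ (T - t) * P T i o := by
  refine eq_pow_mul_of_backward_recurrence (x := fun k => P k i o) (fun k hk => ?_) ht
  simp only [hP k hk, riccatiStep_apply_pivot (riccati_pivot_ne_zero hP hT hS hk)]

theorem riccati_apply_eq_pow_mul_sub_sum (hP : ∀ k < T, P k = riccatiStep M w g o (P (k + 1)))
    (hT : P T o o ≠ 0) (hS : riccatiSchur M w g o o ≠ 0) (ht : t ≤ T) (i j : ι) :
    P t i j = M i j ^ (T - t) * P T i j
      - ∑ k ∈ Finset.Ico t T, M i j ^ (k - t) * (w i * w j / g *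
          ((riccatiSchur M w g i o * riccatiSchur M w g j o / riccatiSchur M w g o o) ^ (T - k - 1)
            * (P T i o * P T j o / P T o o))) := by
  simp only [sub_eq_add_neg, ← Finset.sum_neg_distrib, ← mul_neg]
  refine eq_pow_mul_add_sum_Ico_of_backward_recurrence (x := fun k => P k i j) (fun k hk => ?_) ht
  have column := riccati_apply_pivot_eq_pow_mul hP hT hS hk
  rw [hP k hk, riccatiStep_apply, column i, column j, column o, Nat.sub_sub]
  ring

end Riccati

/-- In the backward Riccati recursion `P_T = [[1,−1],[−1,1]]`,
`P_t = F_t − (1/G_t) H_t H_tᵀ`, the lower-right entry satisfies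
`(P_t)₂₂ = ā^{T−t} − Σ_{j=t}^{T−1} (q²/r)^{T−j−1} · s · ā^{j−t}` for all `0 ≤ t ≤ T`,
where `r, q, s, ā` are as in Theorem 2. -/
theorem stmt_12 (T : ℕ) (A B C D Abar Cbar ρ r q s abar : ℝ)
    (hBD : 0 < B ^ 2 + D ^ 2)
    (hr : r = A ^ 2 + C ^ 2 - (A * B + C * D) ^ 2 / (B ^ 2 + D ^ 2))
    (hrpos : 0 < r)
    (hq : q = A * Abar + C * Cbar
            - (Abar * B + ρ * Cbar * D) * (A * B + C * D) / (B ^ 2 + D ^ 2))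
    (hs : s = (Abar * B + ρ * Cbar * D) ^ 2 / (B ^ 2 + D ^ 2))
    (habar : abar = Abar ^ 2 + Cbar ^ 2)
    (P : ℕ → Matrix (Fin 2) (Fin 2) ℝ)
    (hPT : P T = !![1, -1; -1, 1])
    (hrec : ∀ t, t < T →
      P t = !![(A ^ 2 + C ^ 2) * P (t + 1) 0 0,
               (A * Abar + C * Cbar) * P (t + 1) 0 1;
               (A * Abar + C * Cbar) * P (t + 1) 0 1,
               (Abar ^ 2 + Cbar ^ 2) * P (t + 1) 1 1]
            - (1 / ((B ^ 2 + D ^ 2) * P (t + 1) 0 0)) •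
                vecMulVec
                  ![(A * B + C * D) * P (t + 1) 0 0,
                    (Abar * B + ρ * Cbar * D) * P (t + 1) 1 0]
                  ![(A * B + C * D) * P (t + 1) 0 0,
                    (Abar * B + ρ * Cbar * D) * P (t + 1) 1 0]) :
    ∀ t, t ≤ T →
      P t 1 1 = abar ^ (T - t)
        - ∑ j ∈ Finset.Ico t T, (q ^ 2 / r) ^ (T - j - 1) * s * abar ^ (j - t) := by
  set M : Matrix (Fin 2) (Fin 2) ℝ := !![A ^ 2 + C ^ 2, A * Abar + C * Cbar;
    A * Abar + C * Cbar, Abar ^ 2 + Cbar ^ 2] with hM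
  set w : Fin 2 → ℝ := ![A * B + C * D, Abar * B + ρ * Cbar * D] with hw
  have symm (t : ℕ) (ht : t ≤ T) : (P t).IsSymm := by
    rcases ht.eq_or_lt with rfl | hlt
    · simp [hPT, IsSymm.ext_iff]
    · rw [hrec t hlt]
      exact isSymm_sub_smul_vecMulVec_self (by simp [IsSymm.ext_iff]) _ _
  have step (t : ℕ) (ht : t < T) : P t = riccatiStep M w (B ^ 2 + D ^ 2) 0 (P (t + 1)) := by
    rw [hrec t ht, riccatiStep_fin_two (symm (t + 1) ht)]
  have schur_r : riccatiSchur M w (B ^ 2 + D ^ 2) 0 0 = r := by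
    simp [riccatiSchur, hM, hw, hr]; ring
  have schur_q : riccatiSchur M w (B ^ 2 + D ^ 2) 1 0 = q := by
    simp [riccatiSchur, hM, hw, hq]; ring
  have weight_s : w 1 * w 1 / (B ^ 2 + D ^ 2) = s := by simp [hw, hs, sq]
  have weight_abar : M 1 1 = abar := habar.symm
  intro t ht
  have entry := riccati_apply_eq_pow_mul_sub_sum step (by simp [hPT])
    (schur_r ▸ hrpos.ne') ht 1 1
  rw [schur_r, schur_q, weight_s, weight_abar] at entry
  simpa [hPT, sq, mul_assoc, mul_comm, mul_left_comm] using entry
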